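/- Let N ≥ 3, p > 0, α, β ∈ ℝ, γ ∈ (0,1), and let φ : (0,∞) → (0,∞) be locally γ-Hölder continuous and satisfy, for some constants c₁, c₂ > 0: c₁ r^α ≤ φ(r) ≤ c₂ r^α for all 0 < r < 1, and c₁ r^β ≤ φ(r) ≤ c₂ r^β for all r > 1. Then the equation −Δu = φ(|x|) u^{−p} has a C² positive solution on ℝ^N \ {0} if and only if N + α + p(N−2) > 0 and β < −2. -/

import Mathlib

open Metric Set MeasureTheory Filter

noncomputable def laplacian {N : ℕ} (u : EuclideanSpace ℝ (Fin N) → ℝ)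
    (x : EuclideanSpace ℝ (Fin N)) : ℝ :=
  ∑ i, iteratedFDeriv ℝ 2 u x ![EuclideanSpace.single i 1, EuclideanSpace.single i 1]

/-- A `C²` positive solution of `-Δu = φ(|x|) u^{-p}` on `ℝ^N \ {0}`. -/
def IsSol {N : ℕ} (φ : ℝ → ℝ) (p : ℝ) (u : EuclideanSpace ℝ (Fin N) → ℝ) : Prop :=
  ContDiffOn ℝ 2 u {(0 : EuclideanSpace ℝ (Fin N))}ᶜ ∧
    ∀ x : EuclideanSpace ℝ (Fin N), x ≠ 0 →
      0 < u x ∧ -laplacian u x = φ ‖x‖ * u x ^ (-p)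

/-!
In the radial coordinate `t = ‖x‖ ^ (2 - N)`, which is harmonic, radial solutions are the positive
solutions of `-v'' = W v ^ (-p)` on `(0, ∞)`, where `W` is comparable to a power of `t` near `0` and
near `∞`. Everything reduces to the integrability of `s W(s)` at `0` and of `s ^ (-p) W(s)` at `∞`.

A solution need not be radial, but it is superharmonic, so its minimum `m(t)` over spheres is a
positive concave function of `t`, of at most linear growth. At a point where the minimum is attained
the equation reads `-Δu = φ m ^ (-p)`, and `m ^ (-p)` is bounded below by this growth; comparing `m`
with the solution of the linear two-point problem bounds the integrals of `W` uniformly.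

Conversely, if the two integrals converge, the Green function of `-d²/dt²` turns the equation for
`v = (1 + t) w` into an integral equation for `w ≥ 1`, which a contraction solves.
-/

open scoped Laplacian Gradient Topology
open Module (finrank)

section SecondDerivatives

lemma deriv_deriv_nonneg_of_isLocalMin {f : ℝ → ℝ} {a : ℝ} (hmin : IsLocalMin f a)
    (hf : ContinuousAt f a) : 0 ≤ deriv (deriv f) a := by
  by_contra! hneg
  have hmax : IsLocalMax f a := isLocalMax_of_deriv_deriv_neg hneg hmin.deriv_eq_zero hf
  have hconst : f =ᶠ[𝓝 a] fun _ => f a := by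
    filter_upwards [hmin, hmax] with s hge hle using le_antisymm hle hge
  have hderiv : deriv f =ᶠ[𝓝 a] fun _ => 0 := by simpa using hconst.deriv
  simp [hderiv.deriv_eq] at hneg

lemma deriv_deriv_comp_line {F : Type*} [NormedAddCommGroup F] [NormedSpace ℝ F] {w : F → ℝ}
    {x : F} (hw : ContDiffAt ℝ 2 w x) (e : F) :
    deriv (deriv fun s : ℝ => w (x + s • e)) 0 = iteratedFDeriv ℝ 2 w x ![e, e] := by
  have hline (s : ℝ) : HasDerivAt (fun s : ℝ => x + s • e) e s := by
    simpa using ((hasDerivAt_id s).smul_const e).const_add x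
  have hline_zero : Tendsto (fun s : ℝ => x + s • e) (𝓝 0) (𝓝 x) := by
    simpa using (hline 0).continuousAt.tendsto
  have hfirst : deriv (fun s : ℝ => w (x + s • e)) =ᶠ[𝓝 0] fun s => fderiv ℝ w (x + s • e) e := by
    filter_upwards [hline_zero.eventually (hw.eventually (by simp))] with s hs
    exact ((hs.differentiableAt (by simp)).hasFDerivAt.comp_hasDerivAt s (hline s)).deriv
  have hfderiv : HasFDerivAt (fderiv ℝ w) (fderiv ℝ (fderiv ℝ w) x) (x + (0 : ℝ) • e) := by
    simpa using ((hw.fderiv_right (m := 1) (by norm_num)).differentiableAt (by simp)).hasFDerivAt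
  have hsecond : HasDerivAt (fun s : ℝ => fderiv ℝ w (x + s • e)) (fderiv ℝ (fderiv ℝ w) x e) 0 :=
    hfderiv.comp_hasDerivAt 0 (hline 0)
  rw [hfirst.deriv_eq, iteratedFDeriv_two_apply]
  simpa using (hsecond.clm_apply (hasDerivAt_const 0 e)).deriv

lemma iteratedFDeriv_two_comp {F : Type*} [NormedAddCommGroup F] [NormedSpace ℝ F] {v : ℝ → ℝ}
    {g : F → ℝ} {x : F} (hv : ContDiffAt ℝ 2 v (g x)) (hg : ContDiffAt ℝ 2 g x) (e : F) :
    iteratedFDeriv ℝ 2 (fun y => v (g y)) x ![e, e] =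
      deriv (deriv v) (g x) * fderiv ℝ g x e ^ 2 +
        deriv v (g x) * iteratedFDeriv ℝ 2 g x ![e, e] := by
  have hfirst : fderiv ℝ (fun y => v (g y)) =ᶠ[𝓝 x] fun y => deriv v (g y) • fderiv ℝ g y := by
    filter_upwards [hg.continuousAt.eventually (hv.eventually (by simp)), hg.eventually (by simp)]
      with y hvy hgy
    exact ((hvy.differentiableAt (by simp)).hasDerivAt.comp_hasFDerivAt y
      (hgy.differentiableAt (by simp)).hasFDerivAt).fderiv
  have hderiv_v : HasDerivAt (deriv v) (deriv (deriv v) (g x)) (g x) :=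
    ((hv.derivWithin (m := 1) (by norm_num)).differentiableAt (by simp)).hasDerivAt
  have hfderiv_g : HasFDerivAt (fderiv ℝ g) (fderiv ℝ (fderiv ℝ g) x) x :=
    ((hg.fderiv_right (m := 1) (by norm_num)).differentiableAt (by simp)).hasFDerivAt
  have hsecond : HasFDerivAt (fun y => deriv v (g y) • fderiv ℝ g y) _ x :=
    (hderiv_v.comp_hasFDerivAt x (hg.differentiableAt (by simp)).hasFDerivAt).smul hfderiv_g
  rw [iteratedFDeriv_two_apply, iteratedFDeriv_two_apply, hfirst.fderiv_eq, hsecond.fderiv]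
  simp
  ring

end SecondDerivatives

section Laplacian

lemma norm_sq_rpow_half {F : Type*} [SeminormedAddCommGroup F] (x : F) (a : ℝ) :
    (‖x‖ ^ 2) ^ (a / 2) = ‖x‖ ^ a := by
  rw [← Real.rpow_natCast_mul (norm_nonneg x), Nat.cast_ofNat, mul_div_cancel₀ _ two_ne_zero]

variable {E : Type*} [NormedAddCommGroup E] [InnerProductSpace ℝ E] [FiniteDimensional ℝ E]
  {w g : E → ℝ} {v : ℝ → ℝ} {x : E}

lemma laplacian_nonneg_of_isLocalMin (hw : ContDiffAt ℝ 2 w x) (hmin : IsLocalMin w x) :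
    0 ≤ Δ w x := by
  rw [InnerProductSpace.laplacian_eq_iteratedFDeriv_stdOrthonormalBasis]
  refine Finset.sum_nonneg fun i _ => ?_
  rw [← deriv_deriv_comp_line hw]
  set e := stdOrthonormalBasis ℝ E i
  have hline : ContinuousAt (fun s : ℝ => x + s • e) 0 := by fun_prop
  have hw_line : ContinuousAt w (x + (0 : ℝ) • e) := by simpa using hw.continuousAt
  refine deriv_deriv_nonneg_of_isLocalMin ?_ (ContinuousAt.comp (g := w) hw_line hline)
  have hline_zero : Tendsto (fun s : ℝ => x + s • e) (𝓝 0) (𝓝 x) := by simpa using hline.tendsto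
  filter_upwards [hline_zero.eventually hmin] with s hs
  simpa using hs

lemma laplacian_comp (hv : ContDiffAt ℝ 2 v (g x)) (hg : ContDiffAt ℝ 2 g x) :
    Δ (fun y => v (g y)) x =
      deriv (deriv v) (g x) * ‖∇ g x‖ ^ 2 + deriv v (g x) * Δ g x := by
  have hgrad : ‖∇ g x‖ ^ 2 = ∑ i, fderiv ℝ g x (stdOrthonormalBasis ℝ E i) ^ 2 := by
    simp only [← (stdOrthonormalBasis ℝ E).sum_sq_norm_inner_left, Real.norm_eq_abs, sq_abs,
      inner_gradient_left]
  rw [InnerProductSpace.laplacian_eq_iteratedFDeriv_stdOrthonormalBasis,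
    InnerProductSpace.laplacian_eq_iteratedFDeriv_stdOrthonormalBasis, hgrad, Finset.mul_sum,
    Finset.mul_sum, ← Finset.sum_add_distrib]
  exact Finset.sum_congr rfl fun i _ => iteratedFDeriv_two_comp hv hg _

lemma gradient_norm_sq (x : E) : ∇ (fun y : E => ‖y‖ ^ 2) x = (2 : ℝ) • x := by
  refine HasGradientAt.gradient (hasGradientAt_iff_hasFDerivAt.2 ?_)
  refine (hasStrictFDerivAt_norm_sq x).hasFDerivAt.congr_fderiv ?_
  ext y
  simp

lemma laplacian_norm_sq (x : E) : Δ (fun y : E => ‖y‖ ^ 2) x = 2 * finrank ℝ E := by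
  have hfirst : fderiv ℝ (fun y : E => ‖y‖ ^ 2) = (2 • innerSL ℝ : E →L[ℝ] E →L[ℝ] ℝ) :=
    funext fun y => (hasStrictFDerivAt_norm_sq y).hasFDerivAt.fderiv
  have hsecond (e : E) :
      iteratedFDeriv ℝ 2 (fun y : E => ‖y‖ ^ 2) x ![e, e] = 2 • inner ℝ e e := by
    rw [iteratedFDeriv_two_apply, hfirst, ContinuousLinearMap.fderiv]
    rfl
  simp [InnerProductSpace.laplacian_eq_iteratedFDeriv_stdOrthonormalBasis, hsecond, mul_comm]

lemma gradient_norm_rpow (hx : x ≠ 0) (a : ℝ) :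
    ∇ (fun y : E => ‖y‖ ^ a) x = (a * ‖x‖ ^ (a - 2)) • x := by
  have hsq : ‖x‖ ^ 2 ≠ 0 := by positivity
  have hcomp := (Real.hasDerivAt_rpow_const (p := a / 2) (.inl hsq)).comp_hasFDerivAt x
    (hasStrictFDerivAt_norm_sq x).hasFDerivAt
  simp only [Function.comp_def, norm_sq_rpow_half, show a / 2 - 1 = (a - 2) / 2 by ring]
    at hcomp
  refine HasGradientAt.gradient (hasGradientAt_iff_hasFDerivAt.2 (hcomp.congr_fderiv ?_))
  ext y
  simp
  ring

lemma laplacian_norm_rpow (hx : x ≠ 0) (a : ℝ) :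
    Δ (fun y : E => ‖y‖ ^ a) x = a * (a + finrank ℝ E - 2) * ‖x‖ ^ (a - 2) := by
  have hsq : 0 < ‖x‖ ^ 2 := by positivity
  have hcomp := laplacian_comp (v := fun s => s ^ (a / 2)) (x := x)
    (Real.contDiffAt_rpow_const_of_ne hsq.ne') (contDiff_norm_sq ℝ).contDiffAt
  simp only [norm_sq_rpow_half, Real.deriv_rpow_const', deriv_const_mul_field', gradient_norm_sq,
    laplacian_norm_sq, norm_smul] at hcomp
  have hlower : (‖x‖ ^ 2) ^ (a / 2 - 1) = ‖x‖ ^ (a - 2) := by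
    rw [← norm_sq_rpow_half]; ring_nf
  have hsplit : (‖x‖ ^ 2) ^ (a / 2 - 1 - 1) * ‖x‖ ^ 2 = ‖x‖ ^ (a - 2) := by
    rw [← Real.rpow_add_one hsq.ne', sub_add_cancel, hlower]
  rw [hcomp, hlower]
  norm_num
  linear_combination (a * (a/2 - 1) * 2) * hsplit

end Laplacian

section NewtonKernel

variable {E : Type*} [NormedAddCommGroup E] [InnerProductSpace ℝ E]

/-- The Newtonian potential `‖x‖ ^ (2 - dim E)` of the origin, not normalised. It serves as radial
coordinate, in which the Laplacian of a radial function is a multiple of the second derivative. -/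
noncomputable def newtonKernel (x : E) : ℝ := ‖x‖ ^ (2 - finrank ℝ E : ℝ)

lemma newtonKernel_pos {x : E} (hx : x ≠ 0) : 0 < newtonKernel x :=
  Real.rpow_pos_of_pos (norm_pos_iff.2 hx) _

lemma contDiffAt_newtonKernel {x : E} (hx : x ≠ 0) {n : WithTop ℕ∞} :
    ContDiffAt ℝ n (newtonKernel : E → ℝ) x :=
  (contDiffAt_norm ℝ hx).rpow_const_of_ne (norm_ne_zero_iff.2 hx)

lemma contDiffAt_comp_newtonKernel {v : ℝ → ℝ} (hv : ContDiffOn ℝ 2 v (Ioi 0)) {x : E}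
    (hx : x ≠ 0) : ContDiffAt ℝ 2 (fun y => v (newtonKernel y)) x :=
  ContDiffAt.comp (g := v) x (hv.contDiffAt (Ioi_mem_nhds (newtonKernel_pos hx)))
    (contDiffAt_newtonKernel hx)

lemma laplacian_newtonKernel [FiniteDimensional ℝ E] {x : E} (hx : x ≠ 0) :
    Δ (newtonKernel : E → ℝ) x = 0 :=
  (laplacian_norm_rpow hx _).trans (by ring)

lemma norm_gradient_newtonKernel_sq [FiniteDimensional ℝ E] {x : E} (hx : x ≠ 0) :
    ‖∇ (newtonKernel : E → ℝ) x‖ ^ 2 =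
      (finrank ℝ E - 2 : ℝ) ^ 2 * ‖x‖ ^ (2 - 2 * finrank ℝ E : ℝ) := by
  have hpow : ‖x‖ ^ (2 - 2 * finrank ℝ E : ℝ) =
      (‖x‖ ^ (2 - finrank ℝ E - 2 : ℝ) * ‖x‖) ^ 2 := by
    rw [← Real.rpow_add_one (norm_ne_zero_iff.2 hx), ← Real.rpow_mul_natCast (norm_nonneg x)]
    push_cast
    ring_nf
  have hgradient : ∇ (newtonKernel : E → ℝ) x = _ := gradient_norm_rpow hx _
  rw [hgradient, norm_smul, mul_pow, Real.norm_eq_abs, sq_abs, hpow]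
  ring

lemma laplacian_comp_newtonKernel [FiniteDimensional ℝ E] {v : ℝ → ℝ}
    (hv : ContDiffOn ℝ 2 v (Ioi 0)) {x : E} (hx : x ≠ 0) :
    Δ (fun y : E => v (newtonKernel y)) x =
      deriv (deriv v) (newtonKernel x) * ‖∇ (newtonKernel : E → ℝ) x‖ ^ 2 := by
  rw [laplacian_comp (hv.contDiffAt (Ioi_mem_nhds (newtonKernel_pos hx)))
    (contDiffAt_newtonKernel hx), laplacian_newtonKernel hx, mul_zero, add_zero]

end NewtonKernel

section SphericalMinimum

variable {E : Type*} [NormedAddCommGroup E] [InnerProductSpace ℝ E] {u : E → ℝ}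

lemma newtonKernel_eq_iff (hE : 2 < finrank ℝ E) {x : E} {t : ℝ} (ht : 0 < t) :
    newtonKernel x = t ↔ ‖x‖ = t ^ (2 - finrank ℝ E : ℝ)⁻¹ := by
  have hdim : (2 - finrank ℝ E : ℝ) ≠ 0 := sub_ne_zero.2 (mod_cast hE.ne)
  exact (Real.eq_rpow_inv (norm_nonneg x) ht.le hdim).symm

lemma exists_newtonKernel_eq (hE : 2 < finrank ℝ E) {t : ℝ} (ht : 0 < t) :
    ∃ x : E, newtonKernel x = t := by
  have : Nontrivial E := Module.nontrivial_of_finrank_pos (pos_of_gt hE)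
  obtain ⟨x, hx⟩ := exists_norm_eq E (Real.rpow_nonneg ht.le (2 - finrank ℝ E : ℝ)⁻¹)
  exact ⟨x, (newtonKernel_eq_iff hE ht).2 hx⟩

lemma ne_zero_of_newtonKernel_pos (hE : 2 < finrank ℝ E) {x : E} (hx : 0 < newtonKernel x) :
    x ≠ 0 := by
  rintro rfl
  have hdim : (2 - finrank ℝ E : ℝ) ≠ 0 := sub_ne_zero.2 (mod_cast hE.ne)
  simp [newtonKernel, Real.zero_rpow hdim] at hx

lemma isCompact_preimage_newtonKernel_Icc [FiniteDimensional ℝ E] (hE : 2 < finrank ℝ E)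
    {a b : ℝ} (ha : 0 < a) : IsCompact (newtonKernel ⁻¹' Icc a b : Set E) := by
  have hradii : IsCompact ((fun t : ℝ => t ^ (2 - finrank ℝ E : ℝ)⁻¹) '' Icc a b) :=
    isCompact_Icc.image_of_continuousOn fun t ht =>
      (Real.continuousAt_rpow_const _ _ (.inl (ha.trans_le ht.1).ne')).continuousWithinAt
  have hshell : (newtonKernel ⁻¹' Icc a b : Set E) =
      norm ⁻¹' ((fun t : ℝ => t ^ (2 - finrank ℝ E : ℝ)⁻¹) '' Icc a b) := by
    ext x
    constructor
    · exact fun hx => ⟨_, hx, ((newtonKernel_eq_iff hE (ha.trans_le hx.1)).1 rfl).symm⟩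
    · rintro ⟨t, ht, htx⟩
      rwa [mem_preimage, (newtonKernel_eq_iff hE (ha.trans_le ht.1)).2 htx.symm]
  have := FiniteDimensional.proper_real E
  obtain ⟨R, hR⟩ := hradii.isBounded.exists_norm_le
  rw [hshell]
  refine isCompact_of_isClosed_isBounded (hradii.isClosed.preimage continuous_norm) ?_
  exact isBounded_iff_forall_norm_le.2 ⟨R, fun x hx => by simpa using hR _ hx⟩

/-- The minimum of `u` over the sphere `newtonKernel x = t` (attained for `t > 0` when `u` is
continuous off the origin). -/
noncomputable def levelInf (u : E → ℝ) (t : ℝ) : ℝ := sInf (u '' (newtonKernel ⁻¹' {t}))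

lemma continuousOn_preimage_newtonKernel (hE : 2 < finrank ℝ E) (hu : ContinuousOn u {0}ᶜ)
    {s : Set ℝ} (hs : s ⊆ Ioi 0) : ContinuousOn u (newtonKernel ⁻¹' s) :=
  hu.mono fun _ hx => ne_zero_of_newtonKernel_pos hE (hs hx)

variable [FiniteDimensional ℝ E]

lemma isCompact_preimage_newtonKernel_singleton (hE : 2 < finrank ℝ E) {t : ℝ} (ht : 0 < t) :
    IsCompact (newtonKernel ⁻¹' {t} : Set E) := by
  simpa using isCompact_preimage_newtonKernel_Icc hE (b := t) ht

lemma exists_levelInf_eq (hE : 2 < finrank ℝ E) (hu : ContinuousOn u {0}ᶜ) {t : ℝ} (ht : 0 < t) :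
    ∃ x, newtonKernel x = t ∧ levelInf u t = u x :=
  (isCompact_preimage_newtonKernel_singleton hE ht).exists_sInf_image_eq
    (exists_newtonKernel_eq hE ht)
    (continuousOn_preimage_newtonKernel hE hu (singleton_subset_iff.2 ht))

lemma levelInf_le (hE : 2 < finrank ℝ E) (hu : ContinuousOn u {0}ᶜ) {x : E} (hx : x ≠ 0) :
    levelInf u (newtonKernel x) ≤ u x := by
  have hpos := newtonKernel_pos hx
  exact csInf_le ((isCompact_preimage_newtonKernel_singleton hE hpos).image_of_continuousOn
    (continuousOn_preimage_newtonKernel hE hu (singleton_subset_iff.2 hpos))).bddBelow ⟨x, rfl, rfl⟩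

theorem le_levelInf_of_laplacian_lt (hE : 2 < finrank ℝ E) (hu : ContDiffOn ℝ 2 u {0}ᶜ)
    {v : ℝ → ℝ} (hv : ContDiffOn ℝ 2 v (Ioi 0)) {a b : ℝ} (ha : 0 < a)
    (hva : v a ≤ levelInf u a) (hvb : v b ≤ levelInf u b)
    (hlap : ∀ x, newtonKernel x ∈ Ioo a b → u x = levelInf u (newtonKernel x) →
      Δ u x < Δ (fun y : E => v (newtonKernel y)) x)
    {t : ℝ} (ht : t ∈ Icc a b) : v t ≤ levelInf u t := by
  let w : E → ℝ := fun x => u x - v (newtonKernel x)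
  have hIcc : Icc a b ⊆ Ioi 0 := fun s hs => ha.trans_le hs.1
  have hu_at {x : E} (hx : x ≠ 0) : ContDiffAt ℝ 2 u x :=
    hu.contDiffAt (isOpen_compl_singleton.mem_nhds hx)
  have hw_at {x : E} (hx : x ≠ 0) : ContDiffAt ℝ 2 w x :=
    (hu_at hx).sub (contDiffAt_comp_newtonKernel hv hx)
  have hw_cont : ContinuousOn w {0}ᶜ := fun x hx => (hw_at hx).continuousAt.continuousWithinAt
  obtain ⟨y, hy, hyu⟩ := exists_levelInf_eq hE hu.continuousOn (hIcc ht)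
  obtain ⟨x, hx, hmin⟩ := (isCompact_preimage_newtonKernel_Icc hE ha).exists_isMinOn
    ⟨y, by rwa [mem_preimage, hy]⟩ (continuousOn_preimage_newtonKernel hE hw_cont hIcc)
  have hw_min {z : E} (hz : newtonKernel z ∈ Icc a b) : w x ≤ w z := hmin hz
  have hx0 : x ≠ 0 := ne_zero_of_newtonKernel_pos hE (hIcc hx)
  suffices hwx : 0 ≤ w x by
    have hwy : 0 ≤ w y := hwx.trans (hw_min (by rwa [hy]))
    simp only [w, hy] at hwy
    linarith
  by_contra! hneg
  have hlevel : u x = levelInf u (newtonKernel x) := by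
    obtain ⟨z, hz, hzu⟩ := exists_levelInf_eq hE hu.continuousOn (hIcc hx)
    have hwz : w x ≤ w z := hw_min (by rwa [hz])
    refine le_antisymm ?_ (levelInf_le hE hu.continuousOn hx0)
    simp only [w, hz] at hwz
    linarith
  have hbelow : levelInf u (newtonKernel x) < v (newtonKernel x) := by
    rw [← hlevel]
    exact sub_neg.1 hneg
  have hinterior : newtonKernel x ∈ Ioo a b :=
    ⟨hx.1.lt_of_ne fun h => hva.not_gt (h ▸ hbelow), hx.2.lt_of_ne fun h => hvb.not_gt (h ▸ hbelow)⟩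
  have hloc : IsLocalMin w x :=
    hmin.isLocalMin ((contDiffAt_newtonKernel hx0 (n := 0)).continuousAt.preimage_mem_nhds
      (Icc_mem_nhds hinterior.1 hinterior.2))
  have hΔ : Δ w x = Δ u x - Δ (fun y : E => v (newtonKernel y)) x :=
    (hu_at hx0).laplacian_sub (contDiffAt_comp_newtonKernel hv hx0)
  linarith [laplacian_nonneg_of_isLocalMin (hw_at hx0) hloc, hlap x hinterior hlevel]

theorem concaveOn_levelInf (hE : 2 < finrank ℝ E) (hu : ContDiffOn ℝ 2 u {0}ᶜ)
    (hlap : ∀ x ≠ 0, Δ u x < 0) : ConcaveOn ℝ (Ioi 0) (levelInf u) := by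
  refine LinearOrder.concaveOn_of_lt (convex_Ioi 0) fun s hs t _ hst a b ha hb hab => ?_
  obtain rfl : a = 1 - b := by linarith
  let v : ℝ → ℝ := fun r => levelInf u s + (r - s) * ((levelInf u t - levelInf u s) / (t - s))
  have hts : t - s ≠ 0 := sub_ne_zero.2 hst.ne'
  have hv : ContDiff ℝ 2 v := by fun_prop
  have hderiv : deriv (deriv v) = 0 := by
    ext; simp [v]
  have hbarrier := le_levelInf_of_laplacian_lt hE hu hv.contDiffOn hs (a := s) (b := t)
    (by simp [v]) (by simp [v, mul_div_cancel₀ _ hts])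
    (fun x hx _ => by
      have hx0 : x ≠ 0 := ne_zero_of_newtonKernel_pos hE (hs.trans hx.1)
      simpa [laplacian_comp_newtonKernel hv.contDiffOn hx0, hderiv] using hlap x hx0)
    (t := (1 - b) * s + b * t) ⟨by nlinarith, by nlinarith⟩
  calc (1 - b) • levelInf u s + b • levelInf u t = v ((1 - b) * s + b * t) := by
        simp only [v, smul_eq_mul]
        field_simp
        ring
    _ ≤ levelInf u ((1 - b) • s + b • t) := hbarrier

end SphericalMinimum

section OneVariable

lemma le_mul_max_of_concaveOn {m : ℝ → ℝ} (hm : ConcaveOn ℝ (Ioi 0) m)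
    (hpos : ∀ t, 0 < t → 0 < m t) {t : ℝ} (ht : 0 < t) : m t ≤ m 1 * max 1 t := by
  have three_point {x y z : ℝ} (hx : 0 < x) (hxy : x < y) (hyz : y < z) :
      (z - y) * m x + (y - x) * m z ≤ (z - x) * m y := by
    have hslope := hm.slope_anti_adjacent hx (hx.trans (hxy.trans hyz)) hxy hyz
    rw [div_le_div_iff₀ (sub_pos.2 hyz) (sub_pos.2 hxy)] at hslope
    linarith
  have hm1 := hpos 1 one_pos
  have hmt := hpos t ht
  rcases lt_trichotomy t 1 with hlt | rfl | hgt
  · rw [max_eq_left hlt.le, mul_one]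
    by_contra! hgap
    have hq : 0 < m 1 / (m t - m 1) := div_pos hm1 (sub_pos.2 hgap)
    have hcancel : m 1 / (m t - m 1) * (m t - m 1) = m 1 := div_mul_cancel₀ _ (sub_pos.2 hgap).ne'
    have hineq := three_point ht hlt (lt_add_of_pos_right 1 hq)
    have hfar := hpos _ (add_pos one_pos hq)
    nlinarith [mul_pos (sub_pos.2 hlt) hfar, mul_pos ht hm1]
  · simp
  · rw [max_eq_right hgt.le]
    by_contra! hgap
    have hε : 0 < (m t - m 1 * t) / m t := div_pos (sub_pos.2 hgap) hmt
    have hε1 : (m t - m 1 * t) / m t < 1 := (div_lt_one hmt).2 (by nlinarith)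
    have hcancel : (m t - m 1 * t) / m t * m t = m t - m 1 * t := div_mul_cancel₀ _ hmt.ne'
    have hineq := three_point hε hε1 hgt
    nlinarith [mul_pos (sub_pos.2 hgt) (hpos _ hε), mul_pos hε hm1]

/-- The second primitive of `h` that vanishes together with its derivative at `1`. -/
noncomputable def doublePrimitive (h : ℝ → ℝ) (t : ℝ) : ℝ := ∫ s in (1 : ℝ)..t, (t - s) * h s

variable {h : ℝ → ℝ}

lemma intervalIntegrable_of_continuousOn_Ioi (hh : ContinuousOn h (Ioi 0)) {a b : ℝ} (ha : 0 < a)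
    (hb : 0 < b) : IntervalIntegrable h volume a b :=
  (hh.mono fun _ hs => (lt_inf_iff.2 ⟨ha, hb⟩).trans_le hs.1).intervalIntegrable

lemma hasDerivAt_integral_of_continuousOn_Ioi (hh : ContinuousOn h (Ioi 0)) {t : ℝ} (ht : 0 < t) :
    HasDerivAt (fun t => ∫ s in (1 : ℝ)..t, h s) (h t) t :=
  intervalIntegral.integral_hasDerivAt_right
    (intervalIntegrable_of_continuousOn_Ioi hh one_pos ht)
    (hh.stronglyMeasurableAtFilter isOpen_Ioi t ht) (hh.continuousAt (Ioi_mem_nhds ht))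

lemma doublePrimitive_eq (hh : ContinuousOn h (Ioi 0)) {t : ℝ} (ht : 0 < t) :
    doublePrimitive h t = t * (∫ s in (1 : ℝ)..t, h s) - ∫ s in (1 : ℝ)..t, s * h s := by
  have hsh : ContinuousOn (fun s => s * h s) (Ioi 0) := continuousOn_id.mul hh
  rw [doublePrimitive, ← intervalIntegral.integral_const_mul, ← intervalIntegral.integral_sub
    ((intervalIntegrable_of_continuousOn_Ioi hh one_pos ht).const_mul t)
    (intervalIntegrable_of_continuousOn_Ioi hsh one_pos ht)]
  simp only [sub_mul]

lemma hasDerivAt_doublePrimitive (hh : ContinuousOn h (Ioi 0)) {t : ℝ} (ht : 0 < t) :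
    HasDerivAt (doublePrimitive h) (∫ s in (1 : ℝ)..t, h s) t := by
  have hderiv := ((hasDerivAt_id t).mul (hasDerivAt_integral_of_continuousOn_Ioi hh ht)).sub
    (hasDerivAt_integral_of_continuousOn_Ioi (continuousOn_id.mul hh) ht)
  simp only [id_eq, one_mul, Pi.mul_apply, add_sub_cancel_right] at hderiv
  exact hderiv.congr_of_eventuallyEq
    (eventually_of_mem (Ioi_mem_nhds ht) fun _ hs => doublePrimitive_eq hh hs)

lemma deriv_deriv_doublePrimitive (hh : ContinuousOn h (Ioi 0)) {t : ℝ} (ht : 0 < t) :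
    deriv (deriv (doublePrimitive h)) t = h t := by
  have hderiv : deriv (doublePrimitive h) =ᶠ[𝓝 t] fun t => ∫ s in (1 : ℝ)..t, h s :=
    eventually_of_mem (Ioi_mem_nhds ht) fun _ hs => (hasDerivAt_doublePrimitive hh hs).deriv
  rw [hderiv.deriv_eq, (hasDerivAt_integral_of_continuousOn_Ioi hh ht).deriv]

lemma contDiffOn_two_of_deriv_deriv {v : ℝ → ℝ} {s : Set ℝ} (hs : IsOpen s)
    (hv : DifferentiableOn ℝ v s) (hv' : DifferentiableOn ℝ (deriv v) s)
    (hv'' : ContinuousOn (deriv (deriv v)) s) : ContDiffOn ℝ 2 v s := by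
  have hone : ContDiffOn ℝ (0 + 1) (deriv v) s :=
    (contDiffOn_succ_iff_deriv_of_isOpen hs).2 ⟨hv', by simp, contDiffOn_zero.2 hv''⟩
  rw [← one_add_one_eq_two]
  exact (contDiffOn_succ_iff_deriv_of_isOpen hs).2 ⟨hv, by simp, by simpa using hone⟩

lemma contDiffOn_doublePrimitive (hh : ContinuousOn h (Ioi 0)) :
    ContDiffOn ℝ 2 (doublePrimitive h) (Ioi 0) := by
  have hderiv : ∀ t ∈ Ioi (0 : ℝ), deriv (doublePrimitive h) t = ∫ s in (1 : ℝ)..t, h s :=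
    fun t ht => (hasDerivAt_doublePrimitive hh ht).deriv
  refine contDiffOn_two_of_deriv_deriv isOpen_Ioi
    (fun t ht => (hasDerivAt_doublePrimitive hh ht).differentiableAt.differentiableWithinAt)
    (DifferentiableOn.congr (fun t ht => (hasDerivAt_integral_of_continuousOn_Ioi hh
      ht).differentiableAt.differentiableWithinAt) hderiv)
    (hh.congr fun t ht => deriv_deriv_doublePrimitive hh ht)

end OneVariable

section DoublePrimitiveBounds

variable {h : ℝ → ℝ}

lemma intervalIntegrable_sub_mul (hh : ContinuousOn h (Ioi 0)) {a b : ℝ} (ha : 0 < a) (hb : 0 < b)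
    (t : ℝ) : IntervalIntegrable (fun s => (t - s) * h s) volume a b :=
  intervalIntegrable_of_continuousOn_Ioi ((continuousOn_const.sub continuousOn_id).mul hh) ha hb

lemma integral_mul_le_doublePrimitive (hh : ContinuousOn h (Ioi 0)) (hpos : ∀ s, 0 < s → 0 ≤ h s)
    {a : ℝ} (ha : 0 < a) (ha1 : a ≤ 1) :
    ∫ s in a..1, s * h s ≤ 2 * doublePrimitive h (a / 2) := by
  have ha2 : 0 < a / 2 := half_pos ha
  have hweight {b : ℝ} (hb : 0 < b) : IntervalIntegrable (fun s => (s - a / 2) * h s) volume b 1 :=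
    intervalIntegrable_of_continuousOn_Ioi ((continuousOn_id.sub continuousOn_const).mul hh) hb
      one_pos
  calc ∫ s in a..1, s * h s ≤ ∫ s in a..1, 2 * ((s - a / 2) * h s) := by
        refine intervalIntegral.integral_mono_on ha1 (intervalIntegrable_of_continuousOn_Ioi
          (continuousOn_id.mul hh) ha one_pos) ((hweight ha).const_mul 2) fun s hs => ?_
        nlinarith [mul_nonneg (sub_nonneg.2 hs.1) (hpos s (ha.trans_le hs.1))]
    _ = 2 * ∫ s in a..1, (s - a / 2) * h s := intervalIntegral.integral_const_mul _ _
    _ ≤ 2 * ∫ s in (a / 2)..1, (s - a / 2) * h s := by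
        gcongr
        refine intervalIntegral.integral_mono_interval (by linarith) ha1 le_rfl ?_ (hweight ha2)
        filter_upwards [ae_restrict_mem measurableSet_Ioc] with s hs
        exact mul_nonneg (sub_nonneg.2 hs.1.le) (hpos s (ha2.trans hs.1))
    _ = 2 * doublePrimitive h (a / 2) := by
        rw [doublePrimitive, intervalIntegral.integral_symm, ← intervalIntegral.integral_neg]
        simp only [← neg_mul, neg_sub]

lemma mul_integral_le_doublePrimitive (hh : ContinuousOn h (Ioi 0)) (hpos : ∀ s, 0 < s → 0 ≤ h s)
    {b : ℝ} (hb : 1 ≤ b) : b * ∫ s in (1 : ℝ)..b, h s ≤ doublePrimitive h (2 * b) := by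
  have hb0 : 0 < b := one_pos.trans_le hb
  calc b * ∫ s in (1 : ℝ)..b, h s = ∫ s in (1 : ℝ)..b, b * h s :=
        (intervalIntegral.integral_const_mul _ _).symm
    _ ≤ ∫ s in (1 : ℝ)..b, (2 * b - s) * h s := by
        refine intervalIntegral.integral_mono_on hb
          ((intervalIntegrable_of_continuousOn_Ioi hh one_pos hb0).const_mul b)
          (intervalIntegrable_sub_mul hh one_pos hb0 _) fun s hs => ?_
        exact mul_le_mul_of_nonneg_right (by linarith [hs.2]) (hpos s (one_pos.trans_le hs.1))
    _ ≤ doublePrimitive h (2 * b) := by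
        refine intervalIntegral.integral_mono_interval le_rfl hb (by linarith) ?_
          (intervalIntegrable_sub_mul hh one_pos (by linarith) _)
        filter_upwards [ae_restrict_mem measurableSet_Ioc] with s hs
        exact mul_nonneg (sub_nonneg.2 hs.2) (hpos s (one_pos.trans hs.1))

lemma integrableOn_Ioc_of_doublePrimitive_le (hh : ContinuousOn h (Ioi 0))
    (hpos : ∀ s, 0 < s → 0 ≤ h s) {C : ℝ} (hC : ∀ a, 0 < a → a < 1 → doublePrimitive h a ≤ C) :
    IntegrableOn (fun s => s * h s) (Ioc 0 1) := by
  have ha (n : ℕ) : 0 < (1 : ℝ) / (n + 1) := Nat.one_div_pos_of_nat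
  have ha1 (n : ℕ) : (1 : ℝ) / (n + 1) ≤ 1 := by
    simpa using Nat.one_div_le_one_div (α := ℝ) n.zero_le
  refine integrableOn_Ioc_of_intervalIntegral_norm_bounded_left (I := 2 * C)
    (fun n => (intervalIntegrable_of_continuousOn_Ioi (continuousOn_id.mul hh) (ha n) one_pos).1)
    tendsto_one_div_add_atTop_nhds_zero_nat (.of_forall fun n => ?_)
  calc ∫ s in Ioc (1 / (n + 1 : ℝ)) 1, ‖s * h s‖ = ∫ s in (1 / (n + 1 : ℝ))..1, s * h s := by
        rw [intervalIntegral.integral_of_le (ha1 n)]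
        refine setIntegral_congr_fun measurableSet_Ioc fun s hs => ?_
        have hs0 : 0 < s := (ha n).trans hs.1
        exact Real.norm_of_nonneg (mul_nonneg hs0.le (hpos s hs0))
    _ ≤ 2 * C := by
        grw [integral_mul_le_doublePrimitive hh hpos (ha n) (ha1 n),
          hC _ (half_pos (ha n)) (by linarith [ha1 n])]

lemma integrableOn_Ioi_of_doublePrimitive_le (hh : ContinuousOn h (Ioi 0))
    (hpos : ∀ s, 0 < s → 0 ≤ h s) {C : ℝ} (hC : ∀ b, 1 < b → doublePrimitive h b ≤ C * b) :
    IntegrableOn h (Ioi 1) := by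
  have hb (n : ℕ) : 1 ≤ (n + 1 : ℝ) := by simp
  refine integrableOn_Ioi_of_intervalIntegral_norm_bounded (2 * C) 1
    (fun n => (intervalIntegrable_of_continuousOn_Ioi hh one_pos (one_pos.trans_le (hb n))).1)
    (tendsto_atTop_add_const_right atTop 1 tendsto_natCast_atTop_atTop) (.of_forall fun n => ?_)
  have hnorm : ∫ s in (1 : ℝ)..(n + 1 : ℝ), ‖h s‖ = ∫ s in (1 : ℝ)..(n + 1 : ℝ), h s := by
    refine intervalIntegral.integral_congr fun s hs => ?_
    rw [uIcc_of_le (hb n)] at hs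
    exact Real.norm_of_nonneg (hpos s (one_pos.trans_le hs.1))
  have hmul := (mul_integral_le_doublePrimitive hh hpos (hb n)).trans
    (hC (2 * (n + 1)) (by linarith [hb n]))
  rw [hnorm]
  exact le_of_mul_le_mul_left (by linarith) (one_pos.trans_le (hb n))

lemma deriv_deriv_affine_sub_doublePrimitive (hh : ContinuousOn h (Ioi 0)) (A B : ℝ) {t : ℝ}
    (ht : 0 < t) : deriv (deriv fun t => A + B * t - doublePrimitive h t) t = -h t := by
  have hderiv : deriv (fun t => A + B * t - doublePrimitive h t) =ᶠ[𝓝 t]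
      fun t => B - deriv (doublePrimitive h) t := by
    filter_upwards [Ioi_mem_nhds ht] with s hs
    have hdiff := (hasDerivAt_doublePrimitive hh hs).differentiableAt
    rw [deriv_fun_sub (by fun_prop) hdiff]
    simp
  rw [hderiv.deriv_eq, deriv_const_sub, deriv_deriv_doublePrimitive hh ht]

lemma contDiffOn_affine_sub_doublePrimitive (hh : ContinuousOn h (Ioi 0)) (A B : ℝ) :
    ContDiffOn ℝ 2 (fun t => A + B * t - doublePrimitive h t) (Ioi 0) :=
  (ContDiff.contDiffOn (by fun_prop)).sub (contDiffOn_doublePrimitive hh)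

end DoublePrimitiveBounds

section NewtonWeight

/-- The weight `W` that turns the equation into an ordinary one: for `d = dim E` the function
`v ∘ newtonKernel` solves `-Δ u = φ(‖x‖) u ^ (-p)` iff `-v'' = W v ^ (-p)`. -/
noncomputable def newtonWeight (d : ℕ) (φ : ℝ → ℝ) (s : ℝ) : ℝ :=
  φ (s ^ (2 - d : ℝ)⁻¹) / ((d - 2 : ℝ) ^ 2 * (s ^ (2 - d : ℝ)⁻¹) ^ (2 - 2 * d : ℝ))

variable {d : ℕ} {φ : ℝ → ℝ}

lemma newtonWeight_pos (hd : 2 < d) (hφ : ∀ r, 0 < r → 0 < φ r) {s : ℝ} (hs : 0 < s) :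
    0 < newtonWeight d φ s := by
  have hd' : (0 : ℝ) < d - 2 := sub_pos.2 (mod_cast hd)
  have hr : 0 < s ^ (2 - d : ℝ)⁻¹ := Real.rpow_pos_of_pos hs _
  have := hφ _ hr
  unfold newtonWeight
  positivity

lemma continuousOn_newtonWeight (hd : 2 < d) (hφ : ContinuousOn φ (Ioi 0)) :
    ContinuousOn (newtonWeight d φ) (Ioi 0) := by
  have hd' : (0 : ℝ) < d - 2 := sub_pos.2 (mod_cast hd)
  have hradius : ContinuousOn (fun s : ℝ => s ^ (2 - d : ℝ)⁻¹) (Ioi 0) := fun s hs =>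
    (Real.continuousAt_rpow_const _ _ (.inl (ne_of_gt hs))).continuousWithinAt
  have hradius_pos : MapsTo (fun s : ℝ => s ^ (2 - d : ℝ)⁻¹) (Ioi 0) (Ioi 0) := fun s hs =>
    Real.rpow_pos_of_pos hs _
  refine (hφ.comp hradius hradius_pos).div (continuousOn_const.mul (hradius.rpow_const
    fun s hs => .inl (hradius_pos hs).ne')) fun s hs => ?_
  have := Real.rpow_pos_of_pos (hradius_pos hs) (2 - 2 * d : ℝ)
  positivity

lemma newtonWeight_newtonKernel_mul {E : Type*} [NormedAddCommGroup E] [InnerProductSpace ℝ E]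
    [FiniteDimensional ℝ E] (hE : 2 < finrank ℝ E) (φ : ℝ → ℝ) {x : E} (hx : x ≠ 0) :
    newtonWeight (finrank ℝ E) φ (newtonKernel x) * ‖∇ (newtonKernel : E → ℝ) x‖ ^ 2 =
      φ ‖x‖ := by
  have hd : (0 : ℝ) < finrank ℝ E - 2 := sub_pos.2 (mod_cast hE)
  rw [norm_gradient_newtonKernel_sq hx, newtonWeight,
    ← (newtonKernel_eq_iff hE (newtonKernel_pos hx)).1 rfl]
  exact div_mul_cancel₀ _ (by positivity)

end NewtonWeight

section Necessity

variable {E : Type*} [NormedAddCommGroup E] [InnerProductSpace ℝ E] [FiniteDimensional ℝ E]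
  {φ h : ℝ → ℝ} {p : ℝ} {u : E → ℝ}

/-- The notion `IsSol` on a finite-dimensional inner product space, with Mathlib's Laplacian. -/
def IsPositiveSolution (φ : ℝ → ℝ) (p : ℝ) (u : E → ℝ) : Prop :=
  ContDiffOn ℝ 2 u {0}ᶜ ∧ ∀ x ≠ 0, 0 < u x ∧ -Δ u x = φ ‖x‖ * u x ^ (-p)

lemma levelInf_pos (hE : 2 < finrank ℝ E) (hu : ContinuousOn u {0}ᶜ) (hpos : ∀ x ≠ 0, 0 < u x)
    {t : ℝ} (ht : 0 < t) : 0 < levelInf u t := by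
  obtain ⟨x, hx, hxu⟩ := exists_levelInf_eq hE hu ht
  exact hxu ▸ hpos x (ne_zero_of_newtonKernel_pos hE (hx ▸ ht))

/- The barrier is the function with second derivative `-h` vanishing at `a` and `b`, evaluated
at `1`. -/
lemma doublePrimitive_interpolation_le (hE : 2 < finrank ℝ E) (hu : ContDiffOn ℝ 2 u {0}ᶜ)
    (hpos : ∀ x ≠ 0, 0 < u x) (hh : ContinuousOn h (Ioi 0))
    (hlap : ∀ x ≠ 0, u x = levelInf u (newtonKernel x) →
      h (newtonKernel x) * ‖∇ (newtonKernel : E → ℝ) x‖ ^ 2 < -Δ u x)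
    {a b : ℝ} (ha : 0 < a) (ha1 : a < 1) (hb : 1 < b) :
    (b - 1) * doublePrimitive h a + (1 - a) * doublePrimitive h b ≤ (b - a) * levelInf u 1 := by
  let H := doublePrimitive h
  let B := (H b - H a) / (b - a)
  let v : ℝ → ℝ := fun t => (H a - B * a) + B * t - H t
  have hab : 0 < b - a := by linarith
  have hBmul : B * (b - a) = H b - H a := div_mul_cancel₀ _ hab.ne'
  have hva : v a = 0 := by simp only [v]; ring
  have hvb : v b = 0 := by simp only [v]; linear_combination hBmul
  have hv1 : v 1 = H a + (1 - a) * B := by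
    simp only [v, H, doublePrimitive, intervalIntegral.integral_same]
    ring
  have hv : ContDiffOn ℝ 2 v (Ioi 0) := contDiffOn_affine_sub_doublePrimitive hh _ _
  have hlevel {t : ℝ} (ht : 0 < t) := (levelInf_pos hE hu.continuousOn hpos ht).le
  have hbarrier : v 1 ≤ levelInf u 1 := by
    refine le_levelInf_of_laplacian_lt hE hu hv ha (hva ▸ hlevel ha)
      (hvb ▸ hlevel (one_pos.trans hb)) (fun x hx hxu => ?_) ⟨ha1.le, hb.le⟩
    have hx0 := ne_zero_of_newtonKernel_pos hE (ha.trans hx.1)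
    rw [laplacian_comp_newtonKernel hv hx0,
      deriv_deriv_affine_sub_doublePrimitive hh _ _ (newtonKernel_pos hx0)]
    linarith [hlap x hx0 hxu]
  rw [hv1] at hbarrier
  calc (b - 1) * H a + (1 - a) * H b = (b - a) * (H a + (1 - a) * B) := by
        linear_combination -(1 - a) * hBmul
    _ ≤ (b - a) * levelInf u 1 := mul_le_mul_of_nonneg_left hbarrier hab.le

lemma integrableOn_of_lt_neg_laplacian (hE : 2 < finrank ℝ E) (hu : ContDiffOn ℝ 2 u {0}ᶜ)
    (hpos : ∀ x ≠ 0, 0 < u x) (hh : ContinuousOn h (Ioi 0)) (hh0 : ∀ s, 0 < s → 0 ≤ h s)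
    (hlap : ∀ x ≠ 0, u x = levelInf u (newtonKernel x) →
      h (newtonKernel x) * ‖∇ (newtonKernel : E → ℝ) x‖ ^ 2 < -Δ u x) :
    IntegrableOn (fun s => s * h s) (Ioc 0 1) ∧ IntegrableOn h (Ioi 1) := by
  have hM := levelInf_pos hE hu.continuousOn hpos one_pos
  have hH_two : 0 ≤ doublePrimitive h 2 := by
    simpa using mul_integral_le_doublePrimitive hh hh0 le_rfl
  have hH_half : 0 ≤ doublePrimitive h (1 / 2) := by
    simpa using integral_mul_le_doublePrimitive hh hh0 one_pos le_rfl
  have interpolation {a b : ℝ} (ha : 0 < a) (ha1 : a < 1) (hb : 1 < b) :=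
    doublePrimitive_interpolation_le hE hu hpos hh hlap ha ha1 hb
  constructor
  · refine integrableOn_Ioc_of_doublePrimitive_le hh hh0 (C := 2 * levelInf u 1) fun a ha ha1 => ?_
    nlinarith [interpolation ha ha1 one_lt_two, mul_nonneg (sub_nonneg.2 ha1.le) hH_two]
  · refine integrableOn_Ioi_of_doublePrimitive_le hh hh0 (C := 2 * levelInf u 1) fun b hb => ?_
    nlinarith [interpolation one_half_pos one_half_lt_one hb,
      mul_nonneg (sub_nonneg.2 hb.le) hH_half]

lemma IsPositiveSolution.levelInf_le_mul_max (hE : 2 < finrank ℝ E) (hφ : ∀ r, 0 < r → 0 < φ r)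
    (hu : IsPositiveSolution φ p u) {t : ℝ} (ht : 0 < t) :
    levelInf u t ≤ levelInf u 1 * max 1 t := by
  refine le_mul_max_of_concaveOn (concaveOn_levelInf hE hu.1 fun x hx => ?_)
    (fun s hs => levelInf_pos hE hu.1.continuousOn (fun x hx => (hu.2 x hx).1) hs) ht
  rw [← neg_pos, (hu.2 x hx).2]
  exact mul_pos (hφ _ (norm_pos_iff.2 hx)) (Real.rpow_pos_of_pos (hu.2 x hx).1 _)

lemma IsPositiveSolution.newtonWeight_lt_neg_laplacian (hE : 2 < finrank ℝ E) (hp : 0 ≤ p)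
    (hφ : ∀ r, 0 < r → 0 < φ r) (hu : IsPositiveSolution φ p u) {x : E} (hx : x ≠ 0)
    (hxu : u x = levelInf u (newtonKernel x)) :
    levelInf u 1 ^ (-p) / 2 * (newtonWeight (finrank ℝ E) φ (newtonKernel x) *
      max 1 (newtonKernel x) ^ (-p)) * ‖∇ (newtonKernel : E → ℝ) x‖ ^ 2 < -Δ u x := by
  have hM := levelInf_pos hE hu.1.continuousOn (fun y hy => (hu.2 y hy).1) one_pos
  have hmax : 0 < max 1 (newtonKernel x) := one_pos.trans_le (le_max_left _ _)
  have hbound : levelInf u 1 ^ (-p) * max 1 (newtonKernel x) ^ (-p) ≤ u x ^ (-p) := by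
    rw [← Real.mul_rpow hM.le hmax.le]
    refine Real.rpow_le_rpow_of_nonpos (hu.2 x hx).1 ?_ (neg_nonpos.2 hp)
    exact hxu ▸ hu.levelInf_le_mul_max hE hφ (newtonKernel_pos hx)
  calc _ = φ ‖x‖ * (levelInf u 1 ^ (-p) * max 1 (newtonKernel x) ^ (-p) / 2) := by
        rw [← newtonWeight_newtonKernel_mul hE φ hx]
        ring
    _ < φ ‖x‖ * u x ^ (-p) := by
        refine mul_lt_mul_of_pos_left ?_ (hφ _ (norm_pos_iff.2 hx))
        linarith [Real.rpow_pos_of_pos (hu.2 x hx).1 (-p)]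
    _ = -Δ u x := (hu.2 x hx).2.symm

theorem IsPositiveSolution.integrableOn_newtonWeight (hE : 2 < finrank ℝ E) (hp : 0 ≤ p)
    (hφc : ContinuousOn φ (Ioi 0)) (hφ : ∀ r, 0 < r → 0 < φ r) (hu : IsPositiveSolution φ p u) :
    IntegrableOn (fun s => s * newtonWeight (finrank ℝ E) φ s) (Ioc 0 1) ∧
      IntegrableOn (fun s => newtonWeight (finrank ℝ E) φ s * s ^ (-p)) (Ioi 1) := by
  let c := levelInf u 1 ^ (-p) / 2
  let h : ℝ → ℝ := fun s => c * (newtonWeight (finrank ℝ E) φ s * max 1 s ^ (-p))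
  have hpos : ∀ x ≠ 0, 0 < u x := fun x hx => (hu.2 x hx).1
  have hc : 0 < c := half_pos (Real.rpow_pos_of_pos (levelInf_pos hE hu.1.continuousOn hpos
    one_pos) _)
  have hmax (s : ℝ) : 0 < max 1 s := one_pos.trans_le (le_max_left 1 s)
  have hmax_cont : Continuous fun s : ℝ => max 1 s ^ (-p) :=
    (continuous_const.max continuous_id).rpow_const fun s => .inl (hmax s).ne'
  have hh : ContinuousOn h (Ioi 0) :=
    continuousOn_const.mul ((continuousOn_newtonWeight hE hφc).mul hmax_cont.continuousOn)
  have hh0 (s : ℝ) (hs : 0 < s) : 0 ≤ h s :=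
    mul_nonneg hc.le (mul_nonneg (newtonWeight_pos hE hφ hs).le (Real.rpow_nonneg (hmax s).le _))
  obtain ⟨hsmall, hlarge⟩ := integrableOn_of_lt_neg_laplacian hE hu.1 hpos hh hh0
    fun x hx hxu => hu.newtonWeight_lt_neg_laplacian hE hp hφ hx hxu
  constructor
  · refine IntegrableOn.congr_fun (hsmall.const_mul c⁻¹) (fun s hs => ?_) measurableSet_Ioc
    simp only [h, max_eq_left hs.2, Real.one_rpow, mul_one]
    field_simp
  · refine IntegrableOn.congr_fun (hlarge.const_mul c⁻¹) (fun s hs => ?_) measurableSet_Ioi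
    simp only [h, max_eq_right (mem_Ioi.1 hs).le]
    field_simp

end Necessity

section Hammerstein

open scoped BoundedContinuousFunction NNReal

variable {X : Type*} [TopologicalSpace X] [MeasurableSpace X] {μ : Measure X}
  {k : X → X → ℝ} {B : X → ℝ}

lemma norm_mul_boundedContinuousFunction_le (hkB : ∀ x, ∀ᵐ y ∂μ, ‖k x y‖ ≤ B y) (h : X →ᵇ ℝ)
    (x : X) : ∀ᵐ y ∂μ, ‖k x y * h y‖ ≤ B y * ‖h‖ := by
  filter_upwards [hkB x] with y hy
  rw [norm_mul]
  exact mul_le_mul hy (h.norm_coe_le_norm y) (norm_nonneg _) ((norm_nonneg _).trans hy)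

lemma norm_integral_mul_boundedContinuousFunction_le (hB : Integrable B μ)
    (hkB : ∀ x, ∀ᵐ y ∂μ, ‖k x y‖ ≤ B y) (h : X →ᵇ ℝ) (x : X) :
    ‖∫ y, k x y * h y ∂μ‖ ≤ (∫ y, B y ∂μ) * ‖h‖ := by
  rw [← integral_mul_const]
  exact norm_integral_le_of_norm_le (hB.mul_const _) (norm_mul_boundedContinuousFunction_le hkB h x)

variable [OpensMeasurableSpace X]

lemma integrable_mul_boundedContinuousFunction (hk : ∀ x, AEStronglyMeasurable (k x) μ)
    (hB : Integrable B μ) (hkB : ∀ x, ∀ᵐ y ∂μ, ‖k x y‖ ≤ B y) (h : X →ᵇ ℝ) (x : X) :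
    Integrable (fun y => k x y * h y) μ :=
  (hB.mul_const _).mono' ((hk x).mul h.continuous.aestronglyMeasurable)
    (norm_mul_boundedContinuousFunction_le hkB h x)

theorem exists_continuous_eq_add_integral_mul [FirstCountableTopology X] {f : ℝ → ℝ} {K : ℝ≥0}
    (hk : ∀ x, AEStronglyMeasurable (k x) μ) (hk_cont : ∀ᵐ y ∂μ, Continuous fun x => k x y)
    (hB : Integrable B μ) (hkB : ∀ x, ∀ᵐ y ∂μ, ‖k x y‖ ≤ B y) (hf : LipschitzWith K f)
    (hKB : (∫ y, B y ∂μ) * K < 1) (l : ℝ) :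
    ∃ g : X → ℝ, Continuous g ∧ ∀ x, g x = l + ∫ y, k x y * f (g y) ∂μ := by
  let T (h : X →ᵇ ℝ) : X →ᵇ ℝ := .ofNormedAddCommGroup (fun x => l + ∫ y, k x y * h y ∂μ)
    (continuous_const.add <| continuous_of_dominated
      (fun x => (integrable_mul_boundedContinuousFunction hk hB hkB h x).aestronglyMeasurable)
      (norm_mul_boundedContinuousFunction_le hkB h) (hB.mul_const _)
      (hk_cont.mono fun y hy => hy.mul_const _))
    (‖l‖ + (∫ y, B y ∂μ) * ‖h‖)
    fun x => norm_add_le_of_le le_rfl (norm_integral_mul_boundedContinuousFunction_le hB hkB h x)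
  have hT : LipschitzWith (∫ y, B y ∂μ).toNNReal T := by
    refine LipschitzWith.of_dist_le_mul fun h h' => ?_
    refine (BoundedContinuousFunction.dist_le (by positivity)).2 fun x => ?_
    calc dist (T h x) (T h' x) = ‖∫ y, k x y * (h - h') y ∂μ‖ := by
          simp only [BoundedContinuousFunction.sub_apply, mul_sub]
          rw [integral_sub (integrable_mul_boundedContinuousFunction hk hB hkB h x)
            (integrable_mul_boundedContinuousFunction hk hB hkB h' x)]
          exact (dist_add_left _ _ _).trans (dist_eq_norm _ _)
      _ ≤ (∫ y, B y ∂μ) * ‖h - h'‖ :=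
          norm_integral_mul_boundedContinuousFunction_le hB hkB _ x
      _ ≤ (∫ y, B y ∂μ).toNNReal * dist h h' := by
          rw [dist_eq_norm]
          gcongr
          exact Real.le_coe_toNNReal _
  have hK : (∫ y, B y ∂μ).toNNReal * K < 1 := by
    rwa [mul_comm, ← Real.toNNReal_coe (r := K), ← Real.toNNReal_mul K.coe_nonneg,
      Real.toNNReal_lt_one, mul_comm]
  have hcontr : ContractingWith _ fun g => T (g.comp f hf) :=
    ⟨hK, hT.comp (BoundedContinuousFunction.lipschitz_comp hf)⟩
  exact ⟨hcontr.fixedPoint, BoundedContinuousFunction.continuous _,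
    fun x => DFunLike.congr_fun hcontr.fixedPoint_isFixedPt.symm x⟩

end Hammerstein

section GreenRepresentation

variable {h : ℝ → ℝ}

lemma intervalIntegrable_zero_of_integrableOn_Ioc (hh : ContinuousOn h (Ioi 0))
    (hsmall : IntegrableOn h (Ioc 0 1)) {t : ℝ} (ht : 0 < t) :
    IntervalIntegrable h volume 0 t :=
  ((intervalIntegrable_iff_integrableOn_Ioc_of_le zero_le_one).2 hsmall).trans
    (intervalIntegrable_of_continuousOn_Ioi hh one_pos ht)

lemma integrableOn_Ioi_of_integrableOn_Ioi_one (hh : ContinuousOn h (Ioi 0))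
    (hlarge : IntegrableOn h (Ioi 1)) {t : ℝ} (ht : 0 < t) : IntegrableOn h (Ioi t) :=
  ((intervalIntegrable_of_continuousOn_Ioi hh ht one_pos).1.union hlarge).mono_set
    fun s hs => (le_or_gt s 1).imp (⟨hs, ·⟩) id

lemma eqOn_min_mul_Ioc (h : ℝ → ℝ) (t : ℝ) :
    EqOn (fun s => min s t * h s) (fun s => s * h s) (Ioc 0 t) := fun s hs => by
  simp only [min_eq_left hs.2]

lemma eqOn_min_mul_Ioi (h : ℝ → ℝ) (t : ℝ) :
    EqOn (fun s => min s t * h s) (fun s => t * h s) (Ioi t) := fun s hs => by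
  simp only [min_eq_right (mem_Ioi.1 hs).le]

lemma integrableOn_min_mul (hh : ContinuousOn h (Ioi 0))
    (hsmall : IntegrableOn (fun s => s * h s) (Ioc 0 1)) (hlarge : IntegrableOn h (Ioi 1)) {t : ℝ}
    (ht : 0 < t) : IntegrableOn (fun s => min s t * h s) (Ioi 0) := by
  have hsmall_t :=
    (intervalIntegrable_zero_of_integrableOn_Ioc (continuousOn_id.mul hh) hsmall ht).1
  have hlarge_t := (integrableOn_Ioi_of_integrableOn_Ioi_one hh hlarge ht).const_mul t
  rw [← Ioc_union_Ioi_eq_Ioi ht.le]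
  exact (hsmall_t.congr_fun (eqOn_min_mul_Ioc h t).symm measurableSet_Ioc).union
    (IntegrableOn.congr_fun hlarge_t (eqOn_min_mul_Ioi h t).symm measurableSet_Ioi)

lemma integral_min_mul_eq (hh : ContinuousOn h (Ioi 0))
    (hsmall : IntegrableOn (fun s => s * h s) (Ioc 0 1)) (hlarge : IntegrableOn h (Ioi 1)) {t : ℝ}
    (ht : 0 < t) :
    ∫ s in Ioi 0, min s t * h s =
      (∫ s in (0 : ℝ)..1, s * h s) + (∫ s in Ioi 1, h s) * t - doublePrimitive h t := by
  have hsh : ContinuousOn (fun s => s * h s) (Ioi 0) := continuousOn_id.mul hh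
  have hsplit : ∫ s in Ioi 0, min s t * h s =
      (∫ s in (0 : ℝ)..t, s * h s) + t * ∫ s in Ioi t, h s := by
    have hint := integrableOn_min_mul hh hsmall hlarge ht
    rw [← Ioc_union_Ioi_eq_Ioi ht.le] at hint ⊢
    rw [setIntegral_union (Ioc_disjoint_Ioi le_rfl) measurableSet_Ioi hint.left_of_union
      hint.right_of_union, setIntegral_congr_fun measurableSet_Ioc (eqOn_min_mul_Ioc h t),
      setIntegral_congr_fun measurableSet_Ioi (eqOn_min_mul_Ioi h t), integral_const_mul,
      intervalIntegral.integral_of_le ht.le]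
  have hsmall_eq := intervalIntegral.integral_add_adjacent_intervals
    (intervalIntegrable_zero_of_integrableOn_Ioc hsh hsmall one_pos)
    (intervalIntegrable_of_continuousOn_Ioi hsh one_pos ht)
  have hlarge_eq := intervalIntegral.integral_interval_add_Ioi'
    (intervalIntegrable_of_continuousOn_Ioi hh one_pos ht)
    (integrableOn_Ioi_of_integrableOn_Ioi_one hh hlarge ht)
  rw [hsplit, ← hsmall_eq, ← hlarge_eq, doublePrimitive_eq hh ht]
  ring

end GreenRepresentation

section SingularODE

variable {W q w : ℝ → ℝ} {p : ℝ}

lemma lipschitzWith_max_rpow_neg (hp : 0 ≤ p) {l : ℝ} (hl : 1 ≤ l) :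
    LipschitzWith (p / l).toNNReal fun z : ℝ => max l z ^ (-p) := by
  have hl0 : 0 < l := one_pos.trans_le hl
  have hlip : LipschitzOnWith (p / l).toNNReal (fun z : ℝ => z ^ (-p)) (Ici l) := by
    refine (convex_Ici l).lipschitzOnWith_of_nnnorm_hasDerivWithin_le
      (fun z hz => (Real.hasDerivAt_rpow_const (.inl (hl0.trans_le hz).ne')).hasDerivWithinAt)
      fun z hz => ?_
    have hz0 : 0 < z := hl0.trans_le hz
    rw [← NNReal.coe_le_coe, coe_nnnorm, Real.coe_toNNReal _ (by positivity), norm_mul, norm_neg,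
      Real.norm_of_nonneg hp, Real.norm_of_nonneg (Real.rpow_nonneg hz0.le _), div_eq_mul_inv]
    gcongr
    calc z ^ (-p - 1) ≤ z ^ (-1 : ℝ) :=
          Real.rpow_le_rpow_of_exponent_le (hl.trans hz) (by linarith)
      _ = z⁻¹ := Real.rpow_neg_one z
      _ ≤ l⁻¹ := inv_anti₀ hl0 hz
  rw [← lipschitzOnWith_univ]
  simpa only [mul_one, Function.comp_def, id_eq] using
    hlip.comp (LipschitzWith.id.const_max l).lipschitzOnWith (s := univ)
      fun z _ => le_max_left l z

lemma min_div_one_add_le_min_one {s t : ℝ} (hs : 0 ≤ s) (ht : 0 ≤ t) :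
    min s t / (1 + t) ≤ min s 1 := by
  rw [div_le_iff₀ (by positivity)]
  rcases le_total s 1 with hs1 | hs1
  · rw [min_eq_left hs1]
    nlinarith [min_le_left s t]
  · rw [min_eq_right hs1]
    linarith [min_le_right s t]

lemma integrableOn_mul_of_le_one_add_rpow (hp : 0 ≤ p) (hW : ContinuousOn W (Ioi 0))
    (hW0 : ∀ s, 0 < s → 0 ≤ W s) (hsmall : IntegrableOn (fun s => s * W s) (Ioc 0 1))
    (hlarge : IntegrableOn (fun s => W s * s ^ (-p)) (Ioi 1)) (hq : ContinuousOn q (Ioi 0))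
    (hq0 : ∀ s, 0 < s → 0 ≤ q s) (hq1 : ∀ s, 0 < s → q s ≤ (1 + s) ^ (-p)) :
    IntegrableOn (fun s => s * (W s * q s)) (Ioc 0 1) ∧
      IntegrableOn (fun s => W s * q s) (Ioi 1) := by
  have hWq : ContinuousOn (fun s => W s * q s) (Ioi 0) := hW.mul hq
  constructor
  · refine hsmall.mono' (((continuousOn_id.mul hWq).mono
      Ioc_subset_Ioi_self).aestronglyMeasurable measurableSet_Ioc) ?_
    filter_upwards [ae_restrict_mem measurableSet_Ioc] with s hs
    have hWs := hW0 s hs.1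
    have hqs : q s ≤ 1 := (hq1 s hs.1).trans
      (Real.rpow_le_one_of_one_le_of_nonpos (by linarith [hs.1]) (neg_nonpos.2 hp))
    rw [Real.norm_of_nonneg (mul_nonneg hs.1.le (mul_nonneg hWs (hq0 s hs.1)))]
    exact mul_le_mul_of_nonneg_left (mul_le_of_le_one_right hWs hqs) hs.1.le
  · refine hlarge.mono' ((hWq.mono (Ioi_subset_Ioi zero_le_one)).aestronglyMeasurable
      measurableSet_Ioi) ?_
    filter_upwards [ae_restrict_mem measurableSet_Ioi] with s hs
    have hs0 : 0 < s := one_pos.trans hs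
    have hqs : q s ≤ s ^ (-p) := (hq1 s hs0).trans
      (Real.rpow_le_rpow_of_nonpos hs0 (by linarith) (neg_nonpos.2 hp))
    rw [Real.norm_of_nonneg (mul_nonneg (hW0 s hs0) (hq0 s hs0))]
    exact mul_le_mul_of_nonneg_left hqs (hW0 s hs0)

/- The substitution `v = (1 + t) g` turns the kernel `min s t` into a bounded one, and
`z ↦ max l z ^ (-p)` contracts once `l` is large compared to the mass of that kernel. -/
lemma exists_one_add_mul_eq_add_integral (hp : 0 ≤ p) (hw : ContinuousOn w (Ioi 0))
    (hw0 : ∀ s, 0 < s → 0 ≤ w s) (hint : IntegrableOn (fun s => min s 1 * w s) (Ioi 0)) :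
    ∃ (l : ℝ) (g : ℝ → ℝ), Continuous g ∧ ∀ t, 0 < t → 1 ≤ g t ∧
      (1 + t) * g t = l * (1 + t) + ∫ s in Ioi 0, min s t * (w s * g s ^ (-p)) := by
  let I : ℝ := ∫ s in Ioi 0, min s 1 * w s
  let l : ℝ := 1 + p * I
  let k : ℝ → ℝ → ℝ := fun t s => min s (max t 0) / (1 + max t 0) * w s
  have hk0 (t s : ℝ) (hs : 0 < s) : 0 ≤ k t s := by
    have := hw0 s hs
    positivity
  have hkB (t : ℝ) : ∀ᵐ s ∂volume.restrict (Ioi 0), ‖k t s‖ ≤ min s 1 * w s := by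
    filter_upwards [ae_restrict_mem measurableSet_Ioi] with s hs
    rw [Real.norm_of_nonneg (hk0 t s hs)]
    exact mul_le_mul_of_nonneg_right
      (min_div_one_add_le_min_one (le_of_lt hs) (le_max_right _ _)) (hw0 s hs)
  have hI : 0 ≤ I := setIntegral_nonneg measurableSet_Ioi fun s hs =>
    mul_nonneg (le_min (le_of_lt hs) zero_le_one) (hw0 s hs)
  have hl : 1 ≤ l := le_add_of_nonneg_right (mul_nonneg hp hI)
  have hl0 : 0 < l := one_pos.trans_le hl
  have hIl : I * (p / l).toNNReal < 1 := by
    rw [Real.coe_toNNReal _ (by positivity), ← mul_div_assoc, div_lt_one hl0, mul_comm]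
    exact lt_one_add _
  obtain ⟨g, hg, hg_eq⟩ := exists_continuous_eq_add_integral_mul (k := k)
    (fun t => (ContinuousOn.mul (by fun_prop) hw).aestronglyMeasurable measurableSet_Ioi)
    (.of_forall fun s => by fun_prop (disch := intros; positivity)) hint hkB
    (lipschitzWith_max_rpow_neg hp hl) hIl l
  have hgl (t : ℝ) : l ≤ g t := by
    rw [hg_eq]
    exact le_add_of_nonneg_right <| setIntegral_nonneg measurableSet_Ioi fun s hs =>
      mul_nonneg (hk0 t s hs) (Real.rpow_nonneg (hl0.le.trans (le_max_left _ _)) _)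
  refine ⟨l, g, hg, fun t ht => ⟨hl.trans (hgl t), ?_⟩⟩
  rw [hg_eq t, mul_add, mul_comm l, ← integral_const_mul]
  congr 1
  refine setIntegral_congr_fun measurableSet_Ioi fun s _ => ?_
  simp only [k, max_eq_left ht.le, max_eq_right (hgl s)]
  field_simp

lemma continuousOn_one_add_rpow (a : ℝ) : ContinuousOn (fun s : ℝ => (1 + s) ^ a) (Ioi 0) :=
  (continuousOn_const.add continuousOn_id).rpow_const fun _ hs => .inl (add_pos one_pos hs).ne'

lemma exists_eq_add_integral_min_mul (hp : 0 ≤ p) (hW : ContinuousOn W (Ioi 0))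
    (hW0 : ∀ s, 0 < s → 0 ≤ W s)
    (hint : IntegrableOn (fun s => min s 1 * (W s * (1 + s) ^ (-p))) (Ioi 0)) :
    ∃ (l : ℝ) (v : ℝ → ℝ), ContinuousOn v (Ioi 0) ∧ ∀ t, 0 < t → 1 + t ≤ v t ∧
      v t = l * (1 + t) + ∫ s in Ioi 0, min s t * (W s * v s ^ (-p)) := by
  obtain ⟨l, g, hg, hg_eq⟩ := exists_one_add_mul_eq_add_integral
    (w := fun s => W s * (1 + s) ^ (-p)) hp (hW.mul (continuousOn_one_add_rpow (-p)))
    (fun s hs => mul_nonneg (hW0 s hs) (Real.rpow_nonneg (by positivity) _)) hint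
  refine ⟨l, fun t => (1 + t) * g t, by fun_prop, fun t ht => ⟨?_, ?_⟩⟩
  · exact le_mul_of_one_le_right (by positivity) (hg_eq t ht).1
  · refine (hg_eq t ht).2.trans
      (congrArg _ <| setIntegral_congr_fun measurableSet_Ioi fun s hs => ?_)
    simp only [Real.mul_rpow (add_pos one_pos hs).le (zero_le_one.trans (hg_eq s hs).1)]
    ring

theorem exists_contDiffOn_neg_deriv_deriv_eq (hp : 0 ≤ p) (hW : ContinuousOn W (Ioi 0))
    (hW0 : ∀ s, 0 < s → 0 ≤ W s) (hsmall : IntegrableOn (fun s => s * W s) (Ioc 0 1))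
    (hlarge : IntegrableOn (fun s => W s * s ^ (-p)) (Ioi 1)) :
    ∃ v : ℝ → ℝ, ContDiffOn ℝ 2 v (Ioi 0) ∧
      ∀ t, 0 < t → 0 < v t ∧ -deriv (deriv v) t = W t * v t ^ (-p) := by
  have integrable_of_le {q : ℝ → ℝ} := integrableOn_mul_of_le_one_add_rpow (q := q) hp hW hW0
    hsmall hlarge
  have hone := continuousOn_one_add_rpow (-p)
  obtain ⟨hone_small, hone_large⟩ := integrable_of_le hone
    (fun s hs => Real.rpow_nonneg (by positivity) _) fun s _ => le_rfl
  obtain ⟨l, v, hv, hv_eq⟩ := exists_eq_add_integral_min_mul hp hW hW0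
    (integrableOn_min_mul (hW.mul hone) hone_small hone_large one_pos)
  have hvpos (t : ℝ) (ht : 0 < t) : 0 < v t := (by positivity : 0 < 1 + t).trans_le (hv_eq t ht).1
  let h : ℝ → ℝ := fun s => W s * v s ^ (-p)
  have hvp : ContinuousOn (fun s => v s ^ (-p)) (Ioi 0) :=
    hv.rpow_const fun s hs => .inl (hvpos s hs).ne'
  have hh : ContinuousOn h (Ioi 0) := hW.mul hvp
  obtain ⟨hh_small, hh_large⟩ := integrable_of_le hvp
    (fun s hs => Real.rpow_nonneg (hvpos s hs).le _) fun s hs =>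
      Real.rpow_le_rpow_of_nonpos (by positivity) (hv_eq s hs).1 (neg_nonpos.2 hp)
  let A : ℝ := l + ∫ s in (0 : ℝ)..1, s * h s
  let B : ℝ := l + ∫ s in Ioi 1, h s
  have hgreen : EqOn v (fun t => A + B * t - doublePrimitive h t) (Ioi 0) := fun t ht => by
    rw [(hv_eq t ht).2, integral_min_mul_eq hh hh_small hh_large ht]
    simp only [A, B, h]
    ring
  refine ⟨v, (contDiffOn_affine_sub_doublePrimitive hh A B).congr hgreen,
    fun t ht => ⟨hvpos t ht, ?_⟩⟩
  rw [(hgreen.eventuallyEq_of_mem (Ioi_mem_nhds ht)).deriv.deriv_eq,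
    deriv_deriv_affine_sub_doublePrimitive hh A B ht, neg_neg]

end SingularODE

section ExistenceCriterion

variable {E : Type*} [NormedAddCommGroup E] [InnerProductSpace ℝ E] [FiniteDimensional ℝ E]
  {φ : ℝ → ℝ} {p : ℝ}

lemma isPositiveSolution_comp_newtonKernel (hE : 2 < finrank ℝ E) {v : ℝ → ℝ}
    (hv : ContDiffOn ℝ 2 v (Ioi 0)) (hv_eq : ∀ t, 0 < t → 0 < v t ∧
      -deriv (deriv v) t = newtonWeight (finrank ℝ E) φ t * v t ^ (-p)) :
    IsPositiveSolution φ p fun x : E => v (newtonKernel x) := by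
  refine ⟨fun x hx => (contDiffAt_comp_newtonKernel hv hx).contDiffWithinAt, fun x hx => ?_⟩
  obtain ⟨hvpos, hode⟩ := hv_eq _ (newtonKernel_pos hx)
  refine ⟨hvpos, ?_⟩
  rw [laplacian_comp_newtonKernel hv hx, ← neg_mul, hode, mul_right_comm,
    newtonWeight_newtonKernel_mul hE φ hx]

theorem exists_isPositiveSolution_iff_integrableOn_newtonWeight (hE : 2 < finrank ℝ E)
    (hp : 0 ≤ p) (hφc : ContinuousOn φ (Ioi 0)) (hφ : ∀ r, 0 < r → 0 < φ r) :
    (∃ u : E → ℝ, IsPositiveSolution φ p u) ↔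
      IntegrableOn (fun s => s * newtonWeight (finrank ℝ E) φ s) (Ioc 0 1) ∧
        IntegrableOn (fun s => newtonWeight (finrank ℝ E) φ s * s ^ (-p)) (Ioi 1) := by
  constructor
  · rintro ⟨u, hu⟩
    exact hu.integrableOn_newtonWeight hE hp hφc hφ
  · rintro ⟨hsmall, hlarge⟩
    obtain ⟨v, hv, hv_eq⟩ := exists_contDiffOn_neg_deriv_deriv_eq hp
      (continuousOn_newtonWeight hE hφc) (fun s hs => (newtonWeight_pos hE hφ hs).le) hsmall hlarge
    exact ⟨_, isPositiveSolution_comp_newtonKernel hE hv hv_eq⟩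

lemma integrableOn_newtonWeight_mul_rpow_iff {d : ℕ} (hd : 2 < d) (φ : ℝ → ℝ) (a : ℝ) {S : Set ℝ}
    (hS : MeasurableSet S) (hS0 : S ⊆ Ioi 0) :
    IntegrableOn (fun s => newtonWeight d φ s * s ^ a) ((fun r : ℝ => r ^ (2 - d : ℝ)) '' S) ↔
      IntegrableOn (fun r => r ^ (d - 1 + a * (2 - d) : ℝ) * φ r) S := by
  have hd' : (0 : ℝ) < d - 2 := sub_pos.2 (mod_cast hd)
  have hne : (2 - d : ℝ) ≠ 0 := by linarith
  have hderiv : ∀ r ∈ S, HasDerivWithinAt (fun r : ℝ => r ^ (2 - d : ℝ))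
      ((2 - d) * r ^ (2 - d - 1 : ℝ)) S r := fun r hr =>
    (Real.hasDerivAt_rpow_const (.inl (ne_of_gt (hS0 hr)))).hasDerivWithinAt
  have hinj : InjOn (fun r : ℝ => r ^ (2 - d : ℝ)) S := fun r hr r' hr' hrr' =>
    (Real.rpow_left_inj (le_of_lt (hS0 hr)) (le_of_lt (hS0 hr')) hne).1 hrr'
  have hpull : EqOn (fun r : ℝ => |(2 - d : ℝ) * r ^ (2 - d - 1 : ℝ)| •
      (newtonWeight d φ (r ^ (2 - d : ℝ)) * (r ^ (2 - d : ℝ)) ^ a))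
      (fun r => (d - 2 : ℝ)⁻¹ * (r ^ (d - 1 + a * (2 - d) : ℝ) * φ r)) S := fun r hr => by
    have hr : 0 < r := hS0 hr
    have hexp : r ^ (d - 1 + a * (2 - d) : ℝ) =
        r ^ (2 - d - 1 : ℝ) * (r ^ (2 - d : ℝ)) ^ a / r ^ (2 - 2 * d : ℝ) := by
      rw [eq_div_iff (Real.rpow_pos_of_pos hr _).ne', ← Real.rpow_mul hr.le,
        ← Real.rpow_add hr, ← Real.rpow_add hr]
      ring_nf
    simp only [newtonWeight, Real.rpow_rpow_inv hr.le hne, smul_eq_mul, abs_mul,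
      abs_sub_comm (2 : ℝ), abs_of_pos hd', abs_of_pos (Real.rpow_pos_of_pos hr _), hexp]
    field_simp
  rw [integrableOn_image_iff_integrableOn_abs_deriv_smul hS hderiv hinj,
    integrableOn_congr_fun hpull hS]
  exact integrable_const_mul_iff (inv_pos.2 hd').ne'.isUnit _

lemma image_rpow_Ioi_one {a : ℝ} (ha : a < 0) : (fun r : ℝ => r ^ a) '' Ioi 1 = Ioo 0 1 := by
  refine Subset.antisymm (image_subset_iff.2 fun r hr => ?_) fun s hs => ?_
  · exact ⟨Real.rpow_pos_of_pos (one_pos.trans hr) _, Real.rpow_lt_one_of_one_lt_of_neg hr ha⟩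
  · exact ⟨s ^ a⁻¹, Real.one_lt_rpow_of_pos_of_lt_one_of_neg hs.1 hs.2 (inv_lt_zero.2 ha),
      Real.rpow_inv_rpow hs.1.le ha.ne⟩

lemma image_rpow_Ioo_zero_one {a : ℝ} (ha : a < 0) : (fun r : ℝ => r ^ a) '' Ioo 0 1 = Ioi 1 := by
  refine Subset.antisymm (image_subset_iff.2 fun r hr => ?_) fun s hs => ?_
  · exact Real.one_lt_rpow_of_pos_of_lt_one_of_neg hr.1 hr.2 ha
  · have hs0 : 0 < s := one_pos.trans hs
    exact ⟨s ^ a⁻¹, ⟨Real.rpow_pos_of_pos hs0 _,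
      Real.rpow_lt_one_of_one_lt_of_neg hs (inv_lt_zero.2 ha)⟩, Real.rpow_inv_rpow hs0.le ha.ne⟩

theorem exists_isPositiveSolution_iff_integrableOn (hE : 2 < finrank ℝ E) (hp : 0 ≤ p)
    (hφc : ContinuousOn φ (Ioi 0)) (hφ : ∀ r, 0 < r → 0 < φ r) :
    (∃ u : E → ℝ, IsPositiveSolution φ p u) ↔
      IntegrableOn (fun r => r ^ (finrank ℝ E - 1 + p * (finrank ℝ E - 2) : ℝ) * φ r) (Ioo 0 1) ∧
        IntegrableOn (fun r => r * φ r) (Ioi 1) := by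
  have hneg : (2 - finrank ℝ E : ℝ) < 0 := sub_neg.2 (mod_cast hE)
  have hexp_large : (finrank ℝ E - 1 + 1 * (2 - finrank ℝ E) : ℝ) = 1 := by ring
  have hexp_small : (finrank ℝ E - 1 + -p * (2 - finrank ℝ E) : ℝ) =
      finrank ℝ E - 1 + p * (finrank ℝ E - 2) := by ring
  have hlarge := integrableOn_newtonWeight_mul_rpow_iff hE φ 1 measurableSet_Ioi
    (Ioi_subset_Ioi zero_le_one)
  have hsmall := integrableOn_newtonWeight_mul_rpow_iff hE φ (-p) measurableSet_Ioo
    (Ioo_subset_Ioi_self : Ioo (0 : ℝ) 1 ⊆ Ioi 0)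
  rw [image_rpow_Ioi_one hneg, ← integrableOn_Ioc_iff_integrableOn_Ioo, hexp_large] at hlarge
  rw [image_rpow_Ioo_zero_one hneg, hexp_small] at hsmall
  simp only [Real.rpow_one, mul_comm (newtonWeight _ _ _)] at hlarge
  rw [exists_isPositiveSolution_iff_integrableOn_newtonWeight hE hp hφc hφ, and_comm, hlarge,
    hsmall]

end ExistenceCriterion

section PowerAsymptotics

lemma integrable_iff_of_mul_le_of_le_mul {X : Type*} [MeasurableSpace X] {μ : Measure X}
    {f g : X → ℝ} {c C : ℝ} (hf : AEStronglyMeasurable f μ) (hg : AEStronglyMeasurable g μ)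
    (hg0 : ∀ᵐ x ∂μ, 0 ≤ g x) (hc : 0 < c) (hcf : ∀ᵐ x ∂μ, c * g x ≤ f x)
    (hfC : ∀ᵐ x ∂μ, f x ≤ C * g x) : Integrable f μ ↔ Integrable g μ := by
  refine ⟨fun h => (h.const_mul c⁻¹).mono' hg ?_, fun h => (h.const_mul C).mono' hf ?_⟩
  · filter_upwards [hg0, hcf] with x hx0 hx
    rwa [Real.norm_of_nonneg hx0, le_inv_mul_iff₀ hc]
  · filter_upwards [hg0, hcf, hfC] with x hx0 hxc hxC
    rwa [Real.norm_of_nonneg ((mul_nonneg hc.le hx0).trans hxc)]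

lemma integrableOn_rpow_mul_iff {φ : ℝ → ℝ} {S : Set ℝ} {b c C : ℝ} (a : ℝ) (hS : MeasurableSet S)
    (hS0 : S ⊆ Ioi 0) (hφ : ContinuousOn φ S) (hc : 0 < c)
    (hbound : ∀ r ∈ S, c * r ^ b ≤ φ r ∧ φ r ≤ C * r ^ b) :
    IntegrableOn (fun r => r ^ a * φ r) S ↔ IntegrableOn (fun r : ℝ => r ^ (a + b)) S := by
  have hrpow (e : ℝ) : ContinuousOn (fun r : ℝ => r ^ e) S := fun r hr =>
    (Real.continuousAt_rpow_const _ _ (.inl (ne_of_gt (hS0 hr)))).continuousWithinAt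
  have hmul {r : ℝ} (hr : r ∈ S) (M : ℝ) : M * r ^ (a + b) = r ^ a * (M * r ^ b) := by
    rw [Real.rpow_add (hS0 hr)]
    ring
  have hpos {r : ℝ} (hr : r ∈ S) (e : ℝ) : 0 ≤ r ^ e := Real.rpow_nonneg (le_of_lt (hS0 hr)) e
  refine integrable_iff_of_mul_le_of_le_mul (((hrpow a).mul hφ).aestronglyMeasurable hS)
    ((hrpow (a + b)).aestronglyMeasurable hS) ?_ hc (C := C) ?_ ?_ <;>
  filter_upwards [ae_restrict_mem hS] with r hr
  · exact hpos hr _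
  · exact (hmul hr c).trans_le (mul_le_mul_of_nonneg_left (hbound r hr).1 (hpos hr a))
  · exact (mul_le_mul_of_nonneg_left (hbound r hr).2 (hpos hr a)).trans_eq (hmul hr C).symm

end PowerAsymptotics

lemma isSol_iff_isPositiveSolution {N : ℕ} {φ : ℝ → ℝ} {p : ℝ}
    {u : EuclideanSpace ℝ (Fin N) → ℝ} : IsSol φ p u ↔ IsPositiveSolution φ p u := by
  have hlap (x : EuclideanSpace ℝ (Fin N)) : laplacian u x = Δ u x := by
    rw [InnerProductSpace.laplacian_eq_iteratedFDeriv_orthonormalBasis u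
      (EuclideanSpace.basisFun (Fin N) ℝ)]
    simp only [laplacian, EuclideanSpace.basisFun_apply]
  simp only [IsSol, IsPositiveSolution, hlap]

lemma continuousOn_of_forall_isCompact_holderOnWith {X Y : Type*} [PseudoEMetricSpace X]
    [LocallyCompactSpace X] [PseudoEMetricSpace Y] {f : X → Y} {U : Set X} (hU : IsOpen U)
    {γ : NNReal} (hγ : 0 < γ)
    (hf : ∀ s, IsCompact s → s ⊆ U → ∃ C, HolderOnWith C γ f s) : ContinuousOn f U := by
  intro x hx
  obtain ⟨K, hK, hxK, hKU⟩ := exists_compact_subset hU hx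
  obtain ⟨C, hC⟩ := hf K hK hKU
  exact ((hC.continuousOn hγ).continuousAt (mem_interior_iff_mem_nhds.1 hxK)).continuousWithinAt

theorem statement_13_general {E : Type*} [NormedAddCommGroup E] [InnerProductSpace ℝ E]
    [FiniteDimensional ℝ E] (hE : 2 < finrank ℝ E) {p α β c₁ c₂ : ℝ} (hp : 0 ≤ p) {φ : ℝ → ℝ}
    (hφc : ContinuousOn φ (Ioi 0)) (hφ : ∀ r, 0 < r → 0 < φ r) (hc₁ : 0 < c₁)
    (hα : ∀ r, 0 < r → r < 1 → c₁ * r ^ α ≤ φ r ∧ φ r ≤ c₂ * r ^ α)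
    (hβ : ∀ r, 1 < r → c₁ * r ^ β ≤ φ r ∧ φ r ≤ c₂ * r ^ β) :
    (∃ u : E → ℝ, IsPositiveSolution φ p u) ↔
      0 < finrank ℝ E + α + p * (finrank ℝ E - 2) ∧ β < -2 := by
  have hlarge := integrableOn_rpow_mul_iff 1 measurableSet_Ioi (Ioi_subset_Ioi zero_le_one)
    (hφc.mono (Ioi_subset_Ioi zero_le_one)) hc₁ hβ
  simp only [Real.rpow_one] at hlarge
  rw [exists_isPositiveSolution_iff_integrableOn hE hp hφc hφ, hlarge,
    integrableOn_Ioi_rpow_iff one_pos, integrableOn_rpow_mul_iff _ measurableSet_Ioo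
      Ioo_subset_Ioi_self (hφc.mono Ioo_subset_Ioi_self) hc₁ fun r hr => hα r hr.1 hr.2,
    intervalIntegral.integrableOn_Ioo_rpow_iff one_pos]
  refine and_congr ?_ ?_ <;> constructor <;> intro h <;> linarith

/-- Theorem 4.2 (existence part): `-Δu = φ(|x|) u^{-p}` has `C²` positive solutions on
`ℝ^N \ {0}` iff `N + α + p(N-2) > 0` and `β < -2`. -/
theorem statement_13 {N : ℕ} (hN : 3 ≤ N) (p : ℝ) (hp : 0 < p) (α β : ℝ)
    (γ : NNReal) (hγ0 : 0 < γ) (hγ1 : γ < 1) (φ : ℝ → ℝ)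
    (hφpos : ∀ r : ℝ, 0 < r → 0 < φ r)
    (hφhold : ∀ s : Set ℝ, IsCompact s → s ⊆ Ioi (0:ℝ) → ∃ C : NNReal, HolderOnWith C γ φ s)
    (c₁ c₂ : ℝ) (hc₁ : 0 < c₁) (hc₂ : 0 < c₂)
    (hα : ∀ r : ℝ, 0 < r → r < 1 → c₁ * r ^ α ≤ φ r ∧ φ r ≤ c₂ * r ^ α)
    (hβ : ∀ r : ℝ, 1 < r → c₁ * r ^ β ≤ φ r ∧ φ r ≤ c₂ * r ^ β) :
    (∃ u : EuclideanSpace ℝ (Fin N) → ℝ, IsSol φ p u) ↔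
      (0 < (N:ℝ) + α + p * ((N:ℝ) - 2) ∧ β < -2) := by
  simpa only [isSol_iff_isPositiveSolution, finrank_euclideanSpace_fin] using
    statement_13_general (E := EuclideanSpace ℝ (Fin N))
      (hN.trans_eq finrank_euclideanSpace_fin.symm) hp.le
      (continuousOn_of_forall_isCompact_holderOnWith isOpen_Ioi hγ0 hφhold) hφpos hc₁ hα hβ
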